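/- Fix Δ > 0. In the regime δ = ε → 0, the minimum noise power satisfies lim_{ε → 0⁺} (ε²/Δ²)·V_opt^{L2}(ε, ε, Δ) = 2·(1 − 2·log(3/2) − log²(3/2)); that is, V_opt^{L2}(ε, ε, Δ) is asymptotically 2·(1 − 2·log(3/2) − log²(3/2))·Δ²/ε², and the lower and upper bounds on the minimum noise power are tight in this regime. -/

import Mathlib

open MeasureTheory Real Filter Topology

/-- The (ε,δ)-differential-privacy constraint with sensitivity `Δ` on a noise
distribution `P` on ℝ. -/
def SatisfiesDP (ε δ Δ : ℝ) (P : Measure ℝ) : Prop :=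
  ∀ d : ℝ, |d| ≤ Δ → ∀ S : Set ℝ, MeasurableSet S →
    P S ≤ ENNReal.ofReal (Real.exp ε) * P ((fun s => s + d) '' S) + ENNReal.ofReal δ

/-- The minimum noise power. -/
noncomputable def VoptL2 (ε δ Δ : ℝ) : ENNReal :=
  ⨅ (P : Measure ℝ) (_ : IsProbabilityMeasure P) (_ : SatisfiesDP ε δ Δ P),
    ∫⁻ x : ℝ, ENNReal.ofReal (x ^ 2) ∂P

theorem ofReal_int_le (g : ℝ → ℝ) (hg : Continuous g) (a b : ℝ) (hab : a ≤ b) :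
    ENNReal.ofReal (∫ x in a..b, g x) ≤ ∫⁻ x in Set.Ioc a b, ENNReal.ofReal (g x) := by
  have h1 : ∫ x in a..b, g x ≤ ∫ x in a..b, max (g x) 0 := by
    apply intervalIntegral.integral_mono_on hab (hg.intervalIntegrable _ _)
      ((hg.max continuous_const).intervalIntegrable _ _)
    intro x _
    exact le_max_left _ _
  refine (ENNReal.ofReal_le_ofReal h1).trans ?_
  rw [intervalIntegral.integral_of_le hab, ofReal_integral_eq_lintegral_ofReal]
  · apply lintegral_mono
    intro x
    simp
  · exact ((hg.max continuous_const).intervalIntegrable (μ := volume) a b).1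
  · exact Eventually.of_forall fun x => le_max_right _ _

theorem lint_eq (g : ℝ → ℝ) (hg : Continuous g) (hg0 : ∀ x, 0 ≤ g x) (a b : ℝ) (hab : a ≤ b) :
    ∫⁻ x in Set.Ioc a b, ENNReal.ofReal (g x) = ENNReal.ofReal (∫ x in a..b, g x) := by
  rw [intervalIntegral.integral_of_le hab, ofReal_integral_eq_lintegral_ofReal]
  · exact (hg.intervalIntegrable (μ := volume) a b).1
  · exact Eventually.of_forall hg0

theorem lint_even (g : ℝ → ℝ) (hg : Continuous g) (hg0 : ∀ x, 0 ≤ g x)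
    (he : ∀ x, g (-x) = g x) (A : ℝ) (hA : 0 ≤ A) :
    ∫⁻ x in Set.Icc (-A) A, ENNReal.ofReal (g x) = ENNReal.ofReal (2 * ∫ x in 0..A, g x) := by
  rw [setLIntegral_congr Ioc_ae_eq_Icc.symm, lint_eq g hg hg0 _ _ (by linarith)]
  congr 1
  rw [← intervalIntegral.integral_add_adjacent_intervals (hg.intervalIntegrable (-A) 0)
    (hg.intervalIntegrable 0 A)]
  have : ∫ x in (-A)..0, g x = ∫ x in 0..A, g x := by
    have := intervalIntegral.integral_comp_neg (a := 0) (b := A) g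
    simp only [he, neg_zero] at this
    exact this.symm
  rw [this]; ring

theorem step_bound (ε Δ : ℝ) (hε : 0 < ε) (hΔ : 0 < Δ) (P : Measure ℝ)
    [IsProbabilityMeasure P] (hP : SatisfiesDP ε ε Δ P) (y : ℝ) :
    P.real (Set.Ici y) + P.real (Set.Iic (-y)) + 2 ≤
     Real.exp ε * (P.real (Set.Ici (y + Δ)) + P.real (Set.Iic (-(y + Δ))) + 2) := by
  have key : ∀ S T : Set ℝ, P S ≤ ENNReal.ofReal (Real.exp ε) * P T + ENNReal.ofReal ε →
      P.real S ≤ Real.exp ε * P.real T + ε := by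
    intro S T h
    have := ENNReal.toReal_mono (by finiteness) h
    rw [ENNReal.toReal_add (by finiteness) (by finiteness), ENNReal.toReal_mul,
      ENNReal.toReal_ofReal (Real.exp_pos _).le, ENNReal.toReal_ofReal hε.le] at this
    exact this
  have h1 := hP Δ (by rw [abs_of_pos hΔ]) (Set.Ici y) measurableSet_Ici
  have h2 := hP (-Δ) (by rw [abs_neg, abs_of_pos hΔ]) (Set.Iic (-y)) measurableSet_Iic
  rw [Set.image_add_const_Ici] at h1
  rw [Set.image_add_const_Iic, ← neg_add] at h2
  have h1' := key _ _ h1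
  have h2' := key _ _ h2
  have := Real.add_one_le_exp ε
  nlinarith

theorem tail_bound (ε Δ : ℝ) (hε : 0 < ε) (hΔ : 0 < Δ) (P : Measure ℝ)
    [IsProbabilityMeasure P] (hP : SatisfiesDP ε ε Δ P) (y : ℝ) (hy : 0 ≤ y) :
    3 * Real.exp (-ε) * Real.exp (-(ε / Δ) * y) - 2 ≤
      P.real (Set.Ici y) + P.real (Set.Iic (-y)) := by
  have h0 : 1 ≤ P.real (Set.Ici 0) + P.real (Set.Iic 0) := by
    have h := measureReal_union_le (μ := P) (Set.Ici (0:ℝ)) (Set.Iic 0)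
    rw [Set.union_comm, Set.Iic_union_Ici] at h
    simpa using h
  have hk : ∀ k : ℕ, 3 * Real.exp (-(k * ε)) ≤
      P.real (Set.Ici (k * Δ)) + P.real (Set.Iic (-(k * Δ))) + 2 := by
    intro k
    induction k with
    | zero => simp; linarith
    | succ k ih =>
      have := step_bound ε Δ hε hΔ P hP (k * Δ)
      push_cast
      have e1 : ((k:ℝ) + 1) * Δ = k * Δ + Δ := by ring
      have e2 : Real.exp (-(((k:ℝ) + 1) * ε)) = Real.exp (-(k * ε)) * Real.exp (-ε) := by
        rw [← Real.exp_add]; congr 1; ring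
      rw [e1, e2]
      have h3 := ih.trans this
      have h4 := mul_le_mul_of_nonneg_right h3 (Real.exp_pos (-ε)).le
      have h5 : Real.exp ε * Real.exp (-ε) = 1 := by rw [← Real.exp_add]; simp
      rw [mul_right_comm (Real.exp ε), h5, one_mul] at h4
      linarith
  set k := ⌈y / Δ⌉₊ with hkdef
  have hk1 : y / Δ ≤ k := Nat.le_ceil _
  have hk2 : (k:ℝ) < y / Δ + 1 := Nat.ceil_lt_add_one (by positivity)
  have hyk : y ≤ k * Δ := by rwa [div_le_iff₀ hΔ] at hk1
  have m1 : P.real (Set.Ici (k * Δ)) ≤ P.real (Set.Ici y) :=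
    measureReal_mono (Set.Ici_subset_Ici.2 hyk)
  have m2 : P.real (Set.Iic (-(k * Δ))) ≤ P.real (Set.Iic (-y)) :=
    measureReal_mono (Set.Iic_subset_Iic.2 (by linarith))
  have e : Real.exp (-ε) * Real.exp (-(ε / Δ) * y) ≤ Real.exp (-(k * ε)) := by
    rw [← Real.exp_add, Real.exp_le_exp]
    have : ε / Δ * y = ε * (y / Δ) := by ring
    nlinarith
  have := hk k
  nlinarith

theorem lower_bound (ε Δ : ℝ) (hε : 0 < ε) (hΔ : 0 < Δ) (P : Measure ℝ)
    [IsProbabilityMeasure P] (hP : SatisfiesDP ε ε Δ P) (B : ℝ) (hB : 0 ≤ B) :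
    ENNReal.ofReal (∫ y in 0..B, (3 * Real.exp (-ε) * Real.exp (-(ε / Δ) * y) - 2) * (2 * y)) ≤
      ∫⁻ x : ℝ, ENNReal.ofReal (x ^ 2) ∂P := by
  have h := lintegral_comp_eq_lintegral_meas_le_mul (f := fun x : ℝ => |x|) (g := fun t => 2 * t) P
    (Eventually.of_forall fun x => abs_nonneg x) (by fun_prop)
    (fun t _ => (by fun_prop : Continuous fun t : ℝ => 2 * t).intervalIntegrable _ _)
    (by
      filter_upwards [ae_restrict_mem measurableSet_Ioi] with t ht
      have : (0:ℝ) < t := ht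
      positivity)
  have e : ∀ x : ℝ, ∫ t in 0..|x|, 2 * t = x ^ 2 := by
    intro x
    rw [intervalIntegral.integral_const_mul, integral_id]
    simp
    ring
  simp only [e] at h
  rw [h]
  refine (ofReal_int_le _ (by fun_prop) 0 B hB).trans ?_
  refine le_trans ?_ (lintegral_mono_set (Set.Ioc_subset_Ioi_self (a := B) (b := 0)))
  apply setLIntegral_mono' measurableSet_Ioc
  intro y hy
  have hy0 : 0 < y := hy.1
  rw [ENNReal.ofReal_mul' (by positivity)]
  gcongr
  have hs : {a : ℝ | y ≤ |a|} = Set.Ici y ∪ Set.Iic (-y) := by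
    ext a
    simp only [Set.mem_setOf_eq, Set.mem_union, Set.mem_Ici, Set.mem_Iic, le_abs]
    constructor <;> (rintro (h | h) <;> [left; right] <;> linarith)
  have hd : Disjoint (Set.Ici y) (Set.Iic (-y)) := by
    rw [Set.disjoint_left]
    intro a h1 h2
    have h1' : y ≤ a := h1
    have h2' : a ≤ -y := h2
    linarith
  rw [hs, ← ofReal_measureReal, measureReal_union hd measurableSet_Iic]
  exact ENNReal.ofReal_le_ofReal (tail_bound ε Δ hε hΔ P hP y hy0.le)

theorem lower_integral (ε l T : ℝ) (hl : 0 < l) :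
    l ^ 2 * (∫ y in 0..(T / l), (3 * Real.exp (-ε) * Real.exp (-l * y) - 2) * (2 * y)) =
      6 * Real.exp (-ε) * (1 - Real.exp (-T) * (T + 1)) - 2 * T ^ 2 := by
  have hd : ∀ y ∈ Set.uIcc 0 (T / l), HasDerivAt
      (fun y => -6 * Real.exp (-ε) * (Real.exp (-l * y) * (y / l + 1 / l ^ 2)) - 2 * y ^ 2)
      ((3 * Real.exp (-ε) * Real.exp (-l * y) - 2) * (2 * y)) y := by
    intro y _
    have h1 : HasDerivAt (fun y => Real.exp (-l * y)) (Real.exp (-l * y) * (-l * 1)) y :=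
      ((hasDerivAt_id y).const_mul (-l)).exp
    have h2 : HasDerivAt (fun y => y / l + 1 / l ^ 2) (1 / l) y :=
      ((hasDerivAt_id y).div_const l).add_const _
    have h3 : HasDerivAt (fun y : ℝ => 2 * y ^ 2) (2 * (2 * y)) y := by
      simpa using (hasDerivAt_pow 2 y).const_mul 2
    convert! ((h1.mul h2).const_mul (-6 * Real.exp (-ε))).sub h3 using 1
    field_simp
    ring
  rw [intervalIntegral.integral_eq_sub_of_hasDerivAt hd
    ((by fun_prop : Continuous _).intervalIntegrable _ _)]
  have : -l * (T / l) = -T := by field_simp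
  rw [this]
  simp
  field_simp
  ring

/-! Upper bound: truncated Laplace -/

noncomputable def tl (a l A : ℝ) : ℝ → ENNReal :=
  (Set.Icc (-A) A).indicator (fun x => ENNReal.ofReal (a * Real.exp (-l * |x|)))

theorem tl_meas (a l A : ℝ) : Measurable (tl a l A) := by
  unfold tl
  apply Measurable.indicator _ measurableSet_Icc
  fun_prop

theorem tl_mass (a l A : ℝ) (ha : 0 ≤ a) (hl : 0 < l) (hA : 0 ≤ A) :
    volume.withDensity (tl a l A) Set.univ =
      ENNReal.ofReal (2 * (a * ((1 - Real.exp (-l * A)) / l))) := by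
  rw [withDensity_apply _ MeasurableSet.univ, Measure.restrict_univ, tl,
    lintegral_indicator measurableSet_Icc,
    lint_even _ (by fun_prop) (fun x => by positivity) (fun x => by simp) A hA]
  congr 2
  have hd : ∀ y ∈ Set.uIcc 0 A, HasDerivAt
      (fun y => -a / l * Real.exp (-l * y)) (a * Real.exp (-l * y)) y := by
    intro y _
    have h1 : HasDerivAt (fun y => Real.exp (-l * y)) (Real.exp (-l * y) * (-l * 1)) y :=
      ((hasDerivAt_id y).const_mul (-l)).exp
    convert! h1.const_mul (-a / l) using 1
    field_simp
  have : ∫ x in 0..A, a * Real.exp (-l * |x|) = ∫ x in 0..A, a * Real.exp (-l * x) := by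
    apply intervalIntegral.integral_congr
    intro x hx
    rw [Set.uIcc_of_le hA] at hx
    simp only [abs_of_nonneg hx.1]
  rw [this, intervalIntegral.integral_eq_sub_of_hasDerivAt hd
    ((by fun_prop : Continuous _).intervalIntegrable _ _)]
  simp
  field_simp
  ring

theorem tl_moment (a l A : ℝ) (ha : 0 ≤ a) (hl : 0 < l) (hA : 0 ≤ A) :
    ∫⁻ x, ENNReal.ofReal (x ^ 2) ∂(volume.withDensity (tl a l A)) =
      ENNReal.ofReal (2 * (a * ((2 - Real.exp (-l * A) * ((l * A) ^ 2 + 2 * (l * A) + 2)) / l ^ 3))) := by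
  rw [lintegral_withDensity_eq_lintegral_mul _ (tl_meas a l A) (by fun_prop)]
  have : ∀ x, (tl a l A * fun x => ENNReal.ofReal (x ^ 2)) x =
    (Set.Icc (-A) A).indicator (fun x => ENNReal.ofReal (a * Real.exp (-l * |x|) * x ^ 2)) x := by
    intro x
    simp only [tl, Pi.mul_apply, Set.indicator_apply]
    split_ifs
    · rw [← ENNReal.ofReal_mul (by positivity)]
    · simp
  simp_rw [this]
  rw [lintegral_indicator measurableSet_Icc,
    lint_even _ (by fun_prop) (fun x => by positivity) (fun x => by simp) A hA]
  congr 2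
  have hd : ∀ y ∈ Set.uIcc 0 A, HasDerivAt
      (fun y => -a * (Real.exp (-l * y) * (y ^ 2 / l + 2 * y / l ^ 2 + 2 / l ^ 3)))
      (a * Real.exp (-l * y) * y ^ 2) y := by
    intro y _
    have h1 : HasDerivAt (fun y => Real.exp (-l * y)) (Real.exp (-l * y) * (-l * 1)) y :=
      ((hasDerivAt_id y).const_mul (-l)).exp
    have h2 : HasDerivAt (fun y => y ^ 2 / l + 2 * y / l ^ 2 + 2 / l ^ 3)
        (2 * y / l + 2 * 1 / l ^ 2) y := by
      have h3 : HasDerivAt (fun y : ℝ => y ^ 2) (2 * y) y := by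
        simpa using (hasDerivAt_pow 2 y)
      exact ((h3.div_const l).add (((hasDerivAt_id y).const_mul 2).div_const _)).add_const _
    convert! (h1.mul h2).const_mul (-a) using 1
    field_simp
    ring
  have : ∫ x in 0..A, a * Real.exp (-l * |x|) * x ^ 2 =
      ∫ x in 0..A, a * Real.exp (-l * x) * x ^ 2 := by
    apply intervalIntegral.integral_congr
    intro x hx
    rw [Set.uIcc_of_le hA] at hx
    simp only [abs_of_nonneg hx.1]
  rw [this, intervalIntegral.integral_eq_sub_of_hasDerivAt hd
    ((by fun_prop : Continuous _).intervalIntegrable _ _)]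
  simp
  field_simp
  ring

theorem tl_tail (a l A Δ : ℝ) (ha : 0 ≤ a) (hl : 0 < l) (hΔ : 0 ≤ Δ) :
    ∫⁻ x in Set.Ioc (A - Δ) A, tl a l A x ≤
      ENNReal.ofReal (a * Real.exp (-l * A) * (Real.exp (l * Δ) - 1) / l) := by
  have h1 : ∫⁻ x in Set.Ioc (A - Δ) A, tl a l A x ≤
      ∫⁻ x in Set.Ioc (A - Δ) A, ENNReal.ofReal (a * Real.exp (-l * x)) := by
    apply lintegral_mono
    intro x
    refine (Set.indicator_le_self _ _ _).trans ?_
    apply ENNReal.ofReal_le_ofReal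
    have h2 : Real.exp (-l * |x|) ≤ Real.exp (-l * x) := by
      rw [Real.exp_le_exp]
      have := le_abs_self x
      nlinarith
    exact mul_le_mul_of_nonneg_left h2 ha
  refine h1.trans (le_of_eq ?_)
  rw [lint_eq _ (by fun_prop) (fun x => by positivity) _ _ (by linarith)]
  congr 1
  have hd : ∀ y ∈ Set.uIcc (A - Δ) A, HasDerivAt
      (fun y => -a / l * Real.exp (-l * y)) (a * Real.exp (-l * y)) y := by
    intro y _
    have h1 : HasDerivAt (fun y => Real.exp (-l * y)) (Real.exp (-l * y) * (-l * 1)) y :=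
      ((hasDerivAt_id y).const_mul (-l)).exp
    convert! h1.const_mul (-a / l) using 1
    field_simp
  rw [intervalIntegral.integral_eq_sub_of_hasDerivAt hd
    ((by fun_prop : Continuous _).intervalIntegrable _ _)]
  have : Real.exp (-l * (A - Δ)) = Real.exp (-l * A) * Real.exp (l * Δ) := by
    rw [← Real.exp_add]; congr 1; ring
  rw [this]
  field_simp
  ring

theorem tl_neg (a l A x : ℝ) : tl a l A (-x) = tl a l A x := by
  have : -x ∈ Set.Icc (-A) A ↔ x ∈ Set.Icc (-A) A := by
    simp only [Set.mem_Icc]; constructor <;> (rintro ⟨h1, h2⟩; constructor <;> linarith)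
  simp only [tl, Set.indicator_apply, this, abs_neg]

theorem tl_tail_neg (a l A Δ : ℝ) (ha : 0 ≤ a) (hl : 0 < l) (hΔ : 0 ≤ Δ) :
    ∫⁻ x in Set.Ico (-A) (-A + Δ), tl a l A x ≤
      ENNReal.ofReal (a * Real.exp (-l * A) * (Real.exp (l * Δ) - 1) / l) := by
  refine le_trans (le_of_eq ?_) (tl_tail a l A Δ ha hl hΔ)
  rw [← lintegral_indicator measurableSet_Ico, ← lintegral_indicator measurableSet_Ioc,
    ← lintegral_neg_eq_self]
  congr 1
  ext x
  have : -x ∈ Set.Ico (-A) (-A + Δ) ↔ x ∈ Set.Ioc (A - Δ) A := by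
    simp only [Set.mem_Ico, Set.mem_Ioc]
    constructor <;> (rintro ⟨h1, h2⟩; constructor <;> linarith)
  simp only [Set.indicator_apply, this, tl_neg]

theorem tl_dp (ε Δ a A : ℝ) (hε : 0 < ε) (hΔ : 0 < Δ) (ha : 0 ≤ a)
    (h : a * Real.exp (-(ε / Δ) * A) * (Real.exp ε - 1) / (ε / Δ) ≤ ε) :
    SatisfiesDP ε ε Δ (volume.withDensity (tl a (ε / Δ) A)) := by
  intro d hd S hS
  have hl : 0 < ε / Δ := by positivity
  set l := ε / Δ with hldef
  have hlD : l * Δ = ε := by rw [hldef]; field_simp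
  have hSd : MeasurableSet ((fun s => s + d) '' S) :=
    (MeasurableEquiv.addRight d).measurableSet_image.2 hS
  rw [withDensity_apply _ hS, withDensity_apply _ hSd]
  have e : ∫⁻ x in (fun s => s + d) '' S, tl a l A x = ∫⁻ x in S, tl a l A (x + d) := by
    rw [← lintegral_indicator hSd, ← lintegral_indicator hS,
      ← lintegral_add_right_eq_self (((fun s => s + d) '' S).indicator (tl a l A)) d]
    refine lintegral_congr fun x => ?_
    have : x + d ∈ (fun s => s + d) '' S ↔ x ∈ S := by simp
    by_cases hx : x ∈ S
    · rw [Set.indicator_of_mem (this.2 hx), Set.indicator_of_mem hx]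
    · rw [Set.indicator_of_notMem (fun h' => hx (this.1 h')), Set.indicator_of_notMem hx]
  rw [e]
  have hab := abs_le.1 hd
  obtain ⟨R, hR, hRb, hRp⟩ : ∃ R : Set ℝ, MeasurableSet R ∧
      ∫⁻ x in R, tl a l A x ≤ ENNReal.ofReal ε ∧
      ∀ x ∈ Set.Icc (-A) A, x + d ∉ Set.Icc (-A) A → x ∈ R := by
    rw [← hlD] at h
    rcases le_total 0 d with h0 | h0
    · refine ⟨Set.Ioc (A - Δ) A, measurableSet_Ioc, ?_, ?_⟩
      · exact (tl_tail a l A Δ ha hl hΔ.le).trans (ENNReal.ofReal_le_ofReal (by rw [hlD] at h ⊢; exact h))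
      · intro x hx hx'
        simp only [Set.mem_Icc, not_and, not_le, Set.mem_Ioc] at hx hx' ⊢
        have := hx' (by linarith)
        constructor <;> linarith
    · refine ⟨Set.Ico (-A) (-A + Δ), measurableSet_Ico, ?_, ?_⟩
      · exact (tl_tail_neg a l A Δ ha hl hΔ.le).trans (ENNReal.ofReal_le_ofReal (by rw [hlD] at h ⊢; exact h))
      · intro x hx hx'
        simp only [Set.mem_Icc, not_and, not_le, Set.mem_Ico] at hx hx' ⊢
        refine ⟨hx.1, ?_⟩
        by_contra hc
        have := hx' (by linarith)
        linarith
  have hpt : ∀ x, tl a l A x ≤ ENNReal.ofReal (Real.exp ε) * tl a l A (x + d) +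
      R.indicator (tl a l A) x := by
    intro x
    by_cases hx : x ∈ Set.Icc (-A) A
    · by_cases hx' : x + d ∈ Set.Icc (-A) A
      · refine le_trans ?_ le_self_add
        simp only [tl, Set.indicator_of_mem hx, Set.indicator_of_mem hx']
        rw [← ENNReal.ofReal_mul (Real.exp_pos _).le]
        apply ENNReal.ofReal_le_ofReal
        have : Real.exp (-l * |x|) ≤ Real.exp ε * Real.exp (-l * |x + d|) := by
          rw [← Real.exp_add, Real.exp_le_exp]
          have h1 : |x + d| ≤ |x| + |d| := abs_add_le x d
          nlinarith
        nlinarith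
      · rw [Set.indicator_of_mem (hRp x hx hx')]
        exact le_add_self
    · simp [tl, Set.indicator_of_notMem hx]
  calc ∫⁻ x in S, tl a l A x ≤ ∫⁻ x in S, (ENNReal.ofReal (Real.exp ε) * tl a l A (x + d) +
      R.indicator (tl a l A) x) := lintegral_mono hpt
    _ = ENNReal.ofReal (Real.exp ε) * (∫⁻ x in S, tl a l A (x + d)) +
        ∫⁻ x in S, R.indicator (tl a l A) x := by
      have hm : Measurable fun x => tl a l A (x + d) := (tl_meas a l A).comp (by fun_prop)
      rw [lintegral_add_left (hm.const_mul _), lintegral_const_mul _ hm]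
    _ ≤ _ := by
      gcongr
      refine (setLIntegral_le_lintegral _ _).trans ?_
      rw [lintegral_indicator hR]
      exact hRb

noncomputable def tau (ε : ℝ) : ℝ := Real.log (1 + (Real.exp ε - 1) / (2 * ε))

theorem upper_bound (ε Δ : ℝ) (hε : 0 < ε) (hΔ : 0 < Δ) :
    ENNReal.ofReal (ε ^ 2 / Δ ^ 2) * VoptL2 ε ε Δ ≤ ENNReal.ofReal
      ((2 - Real.exp (-tau ε) * (tau ε ^ 2 + 2 * tau ε + 2)) / (1 - Real.exp (-tau ε))) := by
  have hl : 0 < ε / Δ := by positivity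
  have hlD : ε / Δ * Δ = ε := by field_simp
  have hq : 0 < (Real.exp ε - 1) / (2 * ε) := by
    have := Real.add_one_lt_exp hε.ne'
    apply div_pos <;> linarith
  have hexp : Real.exp (tau ε) = 1 + (Real.exp ε - 1) / (2 * ε) := Real.exp_log (by linarith)
  have ht : 0 < tau ε := Real.log_pos (by linarith)
  set t := tau ε
  set l := ε / Δ with hldef
  have hp : 0 < 1 - Real.exp (-t) := by
    have : Real.exp (-t) < 1 := by rw [Real.exp_lt_one_iff]; linarith
    linarith
  have hA : 0 ≤ t / l := by positivity
  have ha : 0 ≤ l / (2 * (1 - Real.exp (-t))) := by positivity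
  have hla : -l * (t / l) = -t := by field_simp
  have hla' : l * (t / l) = t := by field_simp
  have hprob : IsProbabilityMeasure
      (volume.withDensity (tl (l / (2 * (1 - Real.exp (-t)))) l (t / l))) := by
    constructor
    rw [tl_mass _ _ _ ha hl hA, hla, ← ENNReal.ofReal_one]
    congr 1
    field_simp
  have hDP : SatisfiesDP ε ε Δ
      (volume.withDensity (tl (l / (2 * (1 - Real.exp (-t)))) l (t / l))) := by
    apply tl_dp ε Δ _ _ hε hΔ ha
    rw [← hldef, hla]
    have h1 : Real.exp (-t) * Real.exp t = 1 := by rw [← Real.exp_add]; simp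
    have h2 : Real.exp ε - 1 = 2 * ε * (Real.exp t - 1) := by
      rw [hexp]; field_simp; ring
    rw [h2]
    apply le_of_eq
    field_simp
    linear_combination h1
  calc _ ≤ ENNReal.ofReal (ε ^ 2 / Δ ^ 2) * ∫⁻ x : ℝ, ENNReal.ofReal (x ^ 2)
        ∂(volume.withDensity (tl (l / (2 * (1 - Real.exp (-t)))) l (t / l))) := by
        gcongr
        exact iInf_le_of_le _ (iInf_le_of_le hprob (iInf_le_of_le hDP le_rfl))
    _ = _ := by
        rw [tl_moment _ _ _ ha hl hA, ← ENNReal.ofReal_mul (by positivity), hla, hla']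
        congr 1
        rw [← div_pow, ← hldef]
        field_simp

theorem lower_all (ε Δ : ℝ) (hε : 0 < ε) (hΔ : 0 < Δ) (T : ℝ) (hT : 0 ≤ T) :
    ENNReal.ofReal (6 * Real.exp (-ε) * (1 - Real.exp (-T) * (T + 1)) - 2 * T ^ 2) ≤
    ENNReal.ofReal (ε ^ 2 / Δ ^ 2) * VoptL2 ε ε Δ := by
  have hl : 0 < ε / Δ := by positivity
  rw [← lower_integral ε (ε / Δ) T hl, ENNReal.ofReal_mul (by positivity), div_pow]
  gcongr
  refine le_iInf fun P => le_iInf fun hP => le_iInf fun hDP => ?_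
  exact lower_bound ε Δ hε hΔ P hDP _ (by positivity)

theorem tau_tendsto : Tendsto tau (nhdsWithin 0 (Set.Ioi 0)) (nhds (Real.log (3 / 2))) := by
  have h : Tendsto (fun ε : ℝ => (Real.exp ε - 1) / ε) (nhdsWithin 0 (Set.Ioi 0)) (nhds 1) := by
    have h1 := (Real.hasDerivAt_exp 0).tendsto_slope_zero_right
    simp only [zero_add, Real.exp_zero, smul_eq_mul] at h1
    refine h1.congr fun x => ?_
    rw [div_eq_inv_mul]
  have h2 : Tendsto (fun ε : ℝ => 1 + (Real.exp ε - 1) / ε / 2) (nhdsWithin 0 (Set.Ioi 0))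
      (nhds (3 / 2)) := by
    have := (h.div_const 2).const_add 1
    norm_num at this
    exact this
  have h3 := h2.log (by norm_num)
  refine h3.congr fun x => ?_
  unfold tau
  rw [div_div, mul_comm x 2]

/-- For fixed Δ > 0, in the regime δ = ε → 0⁺ the minimum noise power
satisfies lim (ε²/Δ²)·V_opt^{L2}(ε, ε, Δ) = 2(1 − 2 log(3/2) − log²(3/2)). -/
theorem VoptL2_asymptotics_diagonal
    (Δ : ℝ) (hΔ : 0 < Δ) :
    Tendsto (fun ε : ℝ => ENNReal.ofReal (ε ^ 2 / Δ ^ 2) * VoptL2 ε ε Δ)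
      (nhdsWithin 0 (Set.Ioi 0))
      (nhds (ENNReal.ofReal
        (2 * (1 - 2 * Real.log (3 / 2) - (Real.log (3 / 2)) ^ 2)))) := by
  set T := Real.log (3 / 2) with hTdef
  have hT : 0 < T := Real.log_pos (by norm_num)
  have heT : Real.exp (-T) = 2 / 3 := by
    rw [Real.exp_neg, hTdef, Real.exp_log (by norm_num)]; norm_num
  refine tendsto_of_tendsto_of_tendsto_of_le_of_le'
    (g := fun ε => ENNReal.ofReal
      (6 * Real.exp (-ε) * (1 - Real.exp (-T) * (T + 1)) - 2 * T ^ 2))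
    (h := fun ε => ENNReal.ofReal
      ((2 - Real.exp (-tau ε) * (tau ε ^ 2 + 2 * tau ε + 2)) / (1 - Real.exp (-tau ε))))
    ?_ ?_ ?_ ?_
  · apply ENNReal.tendsto_ofReal
    have hc : Continuous fun ε : ℝ =>
      6 * Real.exp (-ε) * (1 - Real.exp (-T) * (T + 1)) - 2 * T ^ 2 := by fun_prop
    have := (hc.tendsto 0).mono_left (nhdsWithin_le_nhds (s := Set.Ioi 0))
    convert this using 2
    rw [heT]
    simp
    ring
  · apply ENNReal.tendsto_ofReal
    have hc : ContinuousAt (fun t : ℝ =>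
        (2 - Real.exp (-t) * (t ^ 2 + 2 * t + 2)) / (1 - Real.exp (-t))) T := by
      apply ContinuousAt.div (by fun_prop) (by fun_prop)
      rw [heT]; norm_num
    have := hc.tendsto.comp tau_tendsto
    have e : 2 * (1 - 2 * T - T ^ 2) =
        (2 - Real.exp (-T) * (T ^ 2 + 2 * T + 2)) / (1 - Real.exp (-T)) := by
      rw [heT]
      ring
    rw [e]
    exact this
  · filter_upwards [self_mem_nhdsWithin] with ε hε
    exact lower_all ε Δ hε hΔ T hT.le
  · filter_upwards [self_mem_nhdsWithin] with ε hε
    exact upper_bound ε Δ hε hΔ
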